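/- arXiv:1801.04625 — 2 statements merged into one kernel-verified Lean document; each statement's English description precedes it below -/
import Mathlib

section
/- Let u = a+b+1 be a real number, m a positive integer, and suppose Ψ_1, …, Ψ_m : ℝ → ℝ are rational functions with at most simple poles such that: (1) for every polynomial p, the function L_p(x) = ∑_{j=1}^m (-1)^j p(θ(x-j)) Ψ_j(x) is a polynomial, where θ(x) = x(x+a+b+1); and (2) the function M(x) = ∑_{j=1}^m (-1)^j Ψ_j(x+j) satisfies M(-(x+a+b+1)) = -M(x) for all x. Then M is a polynomial. -/
open Polynomial

/-!
Let `res f` be the coefficient of `x⁻¹` in the expansion of a rational function `f` at infinity. It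
is additive, vanishes on polynomials, is invariant under translations and changes sign under
`x ↦ -(x + u)`, where `u = a + b + 1`. Translating each summand of `L_p` by its own shift therefore
gives `res (p(θ) M) = res L_p = 0` for every polynomial `p`. On the other hand `2x + u` is
skew-invariant like `M`, so `(2x + u) p(θ) M` is invariant under the reflection and `res` vanishes
on it as well. The multipliers `θⁱ` and `(2x + u) θⁱ` attain every degree, whereas a nonzero proper
part `c x⁻ᵏ + ⋯` of `M` would give `res (q M) ≠ 0` for every `q` of degree `k - 1`. Hence `M` has no
proper part.
-/

open scoped RatFunc

section Degree

variable {A : Type*} [Semiring A]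

lemma degree_mul_lt_degree_mul_right [NoZeroDivisors A] {R D E : A[X]}
    (hR : R.degree < D.degree) (hE : E ≠ 0) : (R * E).degree < (D * E).degree := by
  rw [degree_mul, degree_mul]
  exact WithBot.add_lt_add_right (degree_ne_bot.2 hE) hR

lemma coeff_mul_natDegree_mul_sub_one [NoZeroDivisors A] {R D E : A[X]}
    (hR : R.degree < D.degree) (hE : E ≠ 0) :
    (R * E).coeff ((D * E).natDegree - 1) = R.coeff (D.natDegree - 1) * E.leadingCoeff := by
  rcases eq_or_ne R 0 with rfl | hR0
  · simp
  have hlt : R.natDegree < D.natDegree := natDegree_lt_natDegree hR0 hR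
  rw [natDegree_mul (ne_zero_of_degree_gt hR) hE, Nat.sub_add_comm (by lia),
    coeff_mul_add_eq_of_natDegree_le (by lia) le_rfl, coeff_natDegree]

lemma coeff_comp_C_mul_X_add_C {P : A[X]} {n : ℕ} (hP : P.natDegree ≤ n) {a : A} (ha : a ≠ 0)
    (b : A) : (P.comp (C a * X + C b)).coeff n = P.coeff n * a ^ n := by
  have hlin : (C a * X + C b).natDegree = 1 := natDegree_linear ha
  rcases hP.eq_or_lt with rfl | hlt
  · have htop := coeff_comp_degree_mul_degree (p := P) (q := C a * X + C b) (by simp [hlin])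
    rwa [hlin, mul_one, leadingCoeff_linear ha] at htop
  · have hcomp : (P.comp (C a * X + C b)).natDegree ≤ P.natDegree :=
      natDegree_comp_le.trans_eq (by rw [hlin, mul_one])
    rw [coeff_eq_zero_of_natDegree_lt hlt, zero_mul,
      coeff_eq_zero_of_natDegree_lt (hcomp.trans_lt hlt)]

end Degree

section InvXCoeff

variable {K : Type*} [Field K]

/-- The coefficient of `X⁻¹` in the expansion of `f` at infinity, i.e. minus the residue of `f dX`
at infinity. It is read off the proper part `(f.num % f.denom) / f.denom` of `f`, whose denominator
is monic; for a polynomial `f` the degree `f.denom.natDegree - 1` is truncated, but then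
`f.num % f.denom = 0`. -/
noncomputable def invXCoeff (f : K⟮X⟯) : K :=
  (f.num % f.denom).coeff (f.denom.natDegree - 1)

lemma eq_algebraMap_add_mod_div_denom (f : K⟮X⟯) :
    f = algebraMap K[X] K⟮X⟯ (f.num / f.denom) +
      algebraMap K[X] K⟮X⟯ (f.num % f.denom) / algebraMap K[X] K⟮X⟯ f.denom := by
  have hdenom := RatFunc.algebraMap_ne_zero f.denom_ne_zero
  rw [← mul_div_cancel_left₀ (algebraMap K[X] K⟮X⟯ (f.num / f.denom)) hdenom, ← add_div,
    ← map_mul, ← map_add, EuclideanDomain.div_add_mod, RatFunc.num_div_denom]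

lemma exists_eq_algebraMap_add_div (f : K⟮X⟯) :
    ∃ P R D : K[X], R.degree < D.degree ∧
      f = algebraMap K[X] K⟮X⟯ P + algebraMap K[X] K⟮X⟯ R / algebraMap K[X] K⟮X⟯ D :=
  ⟨_, _, _, degree_mod_lt _ f.denom_ne_zero, eq_algebraMap_add_mod_div_denom f⟩

lemma mul_eq_mul_of_add_div_eq_add_div {P P' R R' D D' : K[X]} (hR : R.degree < D.degree)
    (hR' : R'.degree < D'.degree)
    (h : algebraMap K[X] K⟮X⟯ P + algebraMap K[X] K⟮X⟯ R / algebraMap K[X] K⟮X⟯ D =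
      algebraMap K[X] K⟮X⟯ P' + algebraMap K[X] K⟮X⟯ R' / algebraMap K[X] K⟮X⟯ D') :
    R * D' = R' * D := by
  have hD : D ≠ 0 := ne_zero_of_degree_gt hR
  have hD' : D' ≠ 0 := ne_zero_of_degree_gt hR'
  have hdvd : D * D' ∣ R * D' - R' * D := by
    refine ⟨P' - P, RatFunc.algebraMap_injective K ?_⟩
    have := RatFunc.algebraMap_ne_zero hD
    have := RatFunc.algebraMap_ne_zero hD'
    field_simp at h
    simp only [map_sub, map_mul]
    linear_combination h
  have hdeg : (R * D' - R' * D).degree < (D * D').degree :=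
    (degree_sub_le _ _).trans_lt <| max_lt (degree_mul_lt_degree_mul_right hR hD')
      (mul_comm D D' ▸ degree_mul_lt_degree_mul_right hR' hD)
  exact sub_eq_zero.1 (eq_zero_of_dvd_of_degree_lt hdvd hdeg)

lemma invXCoeff_add_div (P : K[X]) {R D : K[X]} (hR : R.degree < D.degree) :
    invXCoeff (algebraMap K[X] K⟮X⟯ P + algebraMap K[X] K⟮X⟯ R / algebraMap K[X] K⟮X⟯ D) =
      R.coeff (D.natDegree - 1) / D.leadingCoeff := by
  set f := algebraMap K[X] K⟮X⟯ P + algebraMap K[X] K⟮X⟯ R / algebraMap K[X] K⟮X⟯ D with hf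
  have hD : D ≠ 0 := ne_zero_of_degree_gt hR
  have hmod : (f.num % f.denom).degree < f.denom.degree := degree_mod_lt _ f.denom_ne_zero
  have hcross : f.num % f.denom * D = R * f.denom :=
    mul_eq_mul_of_add_div_eq_add_div hmod hR ((eq_algebraMap_add_mod_div_denom f).symm.trans hf)
  rw [eq_div_iff (leadingCoeff_ne_zero.2 hD), invXCoeff, ← coeff_mul_natDegree_mul_sub_one hmod hD,
    hcross, mul_comm f.denom, coeff_mul_natDegree_mul_sub_one hR f.denom_ne_zero,
    f.monic_denom.leadingCoeff, mul_one]

@[simp]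
lemma invXCoeff_algebraMap (P : K[X]) : invXCoeff (algebraMap K[X] K⟮X⟯ P) = 0 := by
  simp [invXCoeff]

lemma invXCoeff_add (f g : K⟮X⟯) : invXCoeff (f + g) = invXCoeff f + invXCoeff g := by
  obtain ⟨P, R, D, hR, rfl⟩ := exists_eq_algebraMap_add_div f
  obtain ⟨P', R', D', hR', rfl⟩ := exists_eq_algebraMap_add_div g
  have hD : D ≠ 0 := ne_zero_of_degree_gt hR
  have hD' : D' ≠ 0 := ne_zero_of_degree_gt hR'
  have hdeg : (R * D' + R' * D).degree < (D * D').degree :=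
    (degree_add_le _ _).trans_lt <| max_lt (degree_mul_lt_degree_mul_right hR hD')
      (mul_comm D D' ▸ degree_mul_lt_degree_mul_right hR' hD)
  have hsum : algebraMap K[X] K⟮X⟯ P + algebraMap K[X] K⟮X⟯ R / algebraMap K[X] K⟮X⟯ D +
      (algebraMap K[X] K⟮X⟯ P' + algebraMap K[X] K⟮X⟯ R' / algebraMap K[X] K⟮X⟯ D') =
      algebraMap K[X] K⟮X⟯ (P + P') +
        algebraMap K[X] K⟮X⟯ (R * D' + R' * D) / algebraMap K[X] K⟮X⟯ (D * D') := by
    have := RatFunc.algebraMap_ne_zero hD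
    have := RatFunc.algebraMap_ne_zero hD'
    simp only [map_add, map_mul]
    field_simp
    ring
  rw [hsum, invXCoeff_add_div _ hdeg, invXCoeff_add_div _ hR, invXCoeff_add_div _ hR', coeff_add,
    coeff_mul_natDegree_mul_sub_one hR hD', mul_comm D D', coeff_mul_natDegree_mul_sub_one hR' hD,
    leadingCoeff_mul, div_add_div _ _ (leadingCoeff_ne_zero.2 hD) (leadingCoeff_ne_zero.2 hD')]
  ring

lemma invXCoeff_sum {ι : Type*} (t : Finset ι) (f : ι → K⟮X⟯) :
    invXCoeff (∑ j ∈ t, f j) = ∑ j ∈ t, invXCoeff (f j) := by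
  have hzero : invXCoeff (0 : K⟮X⟯) = 0 := by simp [invXCoeff]
  exact Finset.sum_hom_rel (r := fun F c => invXCoeff F = c) hzero
    fun _ _ _ h => by rw [invXCoeff_add, h]

lemma exists_eq_algebraMap_of_invXCoeff_mul_eq_zero (f : K⟮X⟯)
    (h : ∀ n : ℕ, ∃ q : K[X], q.degree = n ∧ invXCoeff (algebraMap K[X] K⟮X⟯ q * f) = 0) :
    ∃ P : K[X], f = algebraMap K[X] K⟮X⟯ P := by
  obtain ⟨P, R, D, hR, rfl⟩ := exists_eq_algebraMap_add_div f
  rcases eq_or_ne R 0 with rfl | hR0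
  · exact ⟨P, by simp⟩
  have hlt : R.natDegree < D.natDegree := natDegree_lt_natDegree hR0 hR
  obtain ⟨q, hq, hzero⟩ := h (D.natDegree - 1 - R.natDegree)
  have hq0 : q ≠ 0 := by rintro rfl; simp at hq
  have hqR : (q * R).natDegree = D.natDegree - 1 := by
    rw [natDegree_mul hq0 hR0, natDegree_eq_of_degree_eq_some hq]
    lia
  have hdeg : (q * R).degree < D.degree := degree_lt_degree (by lia)
  rw [mul_add, mul_div_assoc', ← map_mul, ← map_mul, invXCoeff_add_div _ hdeg, ← hqR,
    coeff_natDegree] at hzero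
  simp [hq0, hR0, ne_zero_of_degree_gt hR] at hzero

end InvXCoeff

section AffineSubst

variable {K : Type*} [Field K]

/-- The substitution `f(X) ↦ f(a X + b)` on rational functions. -/
noncomputable def affineSubst (a : Kˣ) (b : K) : K⟮X⟯ ≃ₐ[K] K⟮X⟯ :=
  IsFractionRing.algEquivOfAlgEquiv (algEquivCMulXAddC (a : K) b)

@[simp]
lemma affineSubst_algebraMap (a : Kˣ) (b : K) (P : K[X]) :
    affineSubst a b (algebraMap K[X] K⟮X⟯ P) =
      algebraMap K[X] K⟮X⟯ (P.comp (C (a : K) * X + C b)) := by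
  simp [affineSubst, comp_eq_aeval]

lemma invXCoeff_affineSubst (a : Kˣ) (b : K) (f : K⟮X⟯) :
    invXCoeff (affineSubst a b f) = (a : K)⁻¹ * invXCoeff f := by
  obtain ⟨P, R, D, hR, rfl⟩ := exists_eq_algebraMap_add_div f
  rcases eq_or_ne R 0 with rfl | hR0
  · simp
  have hlt : R.natDegree < D.natDegree := natDegree_lt_natDegree hR0 hR
  have hlin : (C (a : K) * X + C b).natDegree = 1 := natDegree_linear a.ne_zero
  have hdeg : (R.comp (C (a : K) * X + C b)).degree < (D.comp (C (a : K) * X + C b)).degree :=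
    degree_lt_degree (by rwa [natDegree_comp, natDegree_comp, hlin, mul_one, mul_one])
  rw [map_add, map_div₀, affineSubst_algebraMap, affineSubst_algebraMap, affineSubst_algebraMap,
    invXCoeff_add_div _ hdeg, invXCoeff_add_div _ hR, natDegree_comp, hlin, mul_one,
    coeff_comp_C_mul_X_add_C (by lia) a.ne_zero, leadingCoeff_comp (by simp [hlin]),
    leadingCoeff_linear a.ne_zero]
  obtain ⟨n, hn⟩ := Nat.exists_eq_add_one_of_ne_zero (Nat.ne_zero_of_lt hlt)
  rw [hn, Nat.add_sub_cancel, pow_succ]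
  have ha := a.ne_zero
  field_simp

end AffineSubst

section Skew

variable {K : Type*} [Field K] {ι : Type*} [Fintype ι]

lemma invXCoeff_mul_sum_eq_zero {g : K⟮X⟯} {s : ι → K} {f : ι → K⟮X⟯} {L : K[X]}
    (h : ∑ j, affineSubst 1 (s j) (g * f j) = algebraMap K[X] K⟮X⟯ L) :
    invXCoeff (g * ∑ j, f j) = 0 :=
  calc invXCoeff (g * ∑ j, f j)
    _ = ∑ j, invXCoeff (affineSubst 1 (s j) (g * f j)) := by
      simp only [Finset.mul_sum, invXCoeff_sum, invXCoeff_affineSubst, Units.val_one, inv_one,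
        one_mul]
    _ = 0 := by rw [← invXCoeff_sum, h, invXCoeff_algebraMap]

variable [NeZero (2 : K)]

lemma invXCoeff_eq_zero_of_affineSubst_neg_one_eq_self {b : K} {f : K⟮X⟯}
    (h : affineSubst (-1) b f = f) : invXCoeff f = 0 := by
  have hneg : invXCoeff f = -invXCoeff f := by
    simpa [h] using invXCoeff_affineSubst (-1) b f
  have htwo : 2 * invXCoeff f = 0 := by linear_combination hneg
  exact (mul_eq_zero.1 htwo).resolve_left two_ne_zero

lemma exists_sum_eq_algebraMap (u : K) (s : ι → K) (f : ι → K⟮X⟯)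
    (hpoly : ∀ p : K[X], ∃ L : K[X],
      ∑ j, affineSubst 1 (s j) (algebraMap K[X] K⟮X⟯ (p.comp (X * (X + C u))) * f j) =
        algebraMap K[X] K⟮X⟯ L)
    (hskew : affineSubst (-1) (-u) (∑ j, f j) = -∑ j, f j) :
    ∃ P : K[X], ∑ j, f j = algebraMap K[X] K⟮X⟯ P := by
  have hθ : (X * (X + C u)).degree = 2 := by
    rw [degree_mul, degree_X, degree_X_add_C, one_add_one_eq_two]
  refine exists_eq_algebraMap_of_invXCoeff_mul_eq_zero _ fun n => ?_
  obtain ⟨i, rfl | rfl⟩ := n.even_or_odd'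
  · obtain ⟨L, hL⟩ := hpoly (X ^ i)
    refine ⟨(X * (X + C u)) ^ i, ?_, ?_⟩
    · rw [degree_pow, hθ, nsmul_eq_mul, mul_comm]
      rfl
    · simpa only [X_pow_comp] using invXCoeff_mul_sum_eq_zero hL
  · refine ⟨(C 2 * X + C u) * (X * (X + C u)) ^ i, ?_, ?_⟩
    · rw [degree_mul, degree_linear two_ne_zero, degree_pow, hθ, nsmul_eq_mul, mul_comm, add_comm]
      rfl
    · apply invXCoeff_eq_zero_of_affineSubst_neg_one_eq_self (b := -u)
      have hodd : ((C 2 * X + C u) * (X * (X + C u)) ^ i).comp (C (-1) * X + C (-u)) =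
          -((C 2 * X + C u) * (X * (X + C u)) ^ i) := by
        simp only [mul_comp, add_comp, C_comp, X_comp, pow_comp, C_neg, C_1]
        rw [C_ofNat]
        ring
      rw [map_mul, hskew, affineSubst_algebraMap, Units.val_neg, Units.val_one, hodd, map_neg,
        neg_mul_neg]

end Skew

section Evaluation

variable {ι : Type*} [Fintype ι]

lemma sum_div_eq_iff {F : Type*} [Field F] [DecidableEq ι] (n d : ι → F) (hd : ∀ j, d j ≠ 0)
    (c : F) :
    ∑ j, n j / d j = c ↔ ∑ j, n j * ∏ i ∈ Finset.univ.erase j, d i = c * ∏ j, d j := by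
  rw [← mul_left_inj' (Finset.prod_ne_zero_iff.2 fun j _ => hd j), Finset.sum_mul]
  refine Eq.congr_left (Finset.sum_congr rfl fun j _ => ?_)
  rw [← Finset.mul_prod_erase _ d (Finset.mem_univ j), ← mul_assoc, div_mul_cancel₀ _ (hd j)]

lemma eq_iff_forall_eval_eq {A : Type*} [CommRing A] [IsDomain A] [Infinite A] {D : A[X]}
    (hD : D ≠ 0) (P Q : A[X]) : P = Q ↔ ∀ x, D.eval x ≠ 0 → P.eval x = Q.eval x := by
  refine ⟨fun h x _ => by rw [h], fun h => mul_left_cancel₀ hD (Polynomial.funext fun x => ?_)⟩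
  rcases eq_or_ne (D.eval x) 0 with hx | hx
  · simp [hx]
  · simp [h x hx]

variable {K : Type*} [Field K] [Infinite K]

lemma sum_div_eq_algebraMap_iff_forall_eval (N D : ι → K[X]) (hD : ∀ j, D j ≠ 0) (P : K[X]) :
    ∑ j, algebraMap K[X] K⟮X⟯ (N j) / algebraMap K[X] K⟮X⟯ (D j) = algebraMap K[X] K⟮X⟯ P ↔
      ∀ x, (∀ j, (D j).eval x ≠ 0) → ∑ j, (N j).eval x / (D j).eval x = P.eval x := by
  classical
  have hprod : ∏ j, D j ≠ 0 := Finset.prod_ne_zero_iff.2 fun j _ => hD j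
  rw [sum_div_eq_iff _ _ fun j => RatFunc.algebraMap_ne_zero (hD j)]
  simp only [← map_prod, ← map_mul, ← map_sum, (RatFunc.algebraMap_injective K).eq_iff]
  rw [eq_iff_forall_eval_eq hprod]
  refine forall_congr' fun x => ?_
  rw [eval_prod, Finset.prod_ne_zero_iff]
  simp only [Finset.mem_univ, true_imp_iff]
  refine forall_congr' fun hx => ?_
  rw [sum_div_eq_iff _ _ hx]
  simp only [eval_finsetSum, eval_mul, eval_prod]

lemma affineSubst_sum_div_eq_neg (a : Kˣ) (b : K) (N D : ι → K[X]) (hD : ∀ j, D j ≠ 0)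
    (h : ∀ x, (∀ j, (D j).eval x ≠ 0) → (∀ j, (D j).eval (a * x + b) ≠ 0) →
      ∑ j, (N j).eval (a * x + b) / (D j).eval (a * x + b) =
        -∑ j, (N j).eval x / (D j).eval x) :
    affineSubst a b (∑ j, algebraMap K[X] K⟮X⟯ (N j) / algebraMap K[X] K⟮X⟯ (D j)) =
      -∑ j, algebraMap K[X] K⟮X⟯ (N j) / algebraMap K[X] K⟮X⟯ (D j) := by
  let subst : K[X] → K[X] := fun P => P.comp (C (a : K) * X + C b)
  have hsubst (j : ι) : subst (D j) ≠ 0 := by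
    rw [← map_ne_zero_iff _ (RatFunc.algebraMap_injective K), ← affineSubst_algebraMap]
    exact (map_ne_zero (affineSubst a b)).2 (RatFunc.algebraMap_ne_zero (hD j))
  have hsum := (sum_div_eq_algebraMap_iff_forall_eval (Sum.elim (subst ∘ N) N)
    (Sum.elim (subst ∘ D) D) (Sum.rec hsubst hD) 0).2 fun x hx => by
      have hx' := h x (fun j => hx (.inr j)) fun j => by simpa [subst] using hx (.inl j)
      simp [subst, hx']
  rw [← add_eq_zero_iff_eq_neg]
  simpa [subst] using hsum

end Evaluation

theorem stmt_12_general {K ι : Type*} [Field K] [Infinite K] [NeZero (2 : K)] [Fintype ι]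
    (u : K) (s : ι → K) (num den : ι → K[X]) (hden : ∀ j, den j ≠ 0) (Ψ : ι → K → K)
    (hΨ : ∀ j x, Ψ j x = (num j).eval x / (den j).eval x)
    (hL : ∀ p : K[X], ∃ L : K[X], ∀ x, (∀ j, (den j).eval x ≠ 0) →
      ∑ j, p.eval ((x - s j) * (x - s j + u)) * Ψ j x = L.eval x)
    (M : K → K) (hM : ∀ x, M x = ∑ j, Ψ j (x + s j))
    (hskew : ∀ x, (∀ j, (den j).eval (x + s j) ≠ 0) →
      (∀ j, (den j).eval (-(x + u) + s j) ≠ 0) → M (-(x + u)) = -M x) :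
    ∃ P : K[X], ∀ x, (∀ j, (den j).eval (x + s j) ≠ 0) → M x = P.eval x := by
  let N (j : ι) : K[X] := (num j).comp (X + C (s j))
  let D (j : ι) : K[X] := (den j).comp (X + C (s j))
  have hD (j : ι) : D j ≠ 0 := comp_X_add_C_ne_zero_iff.2 (hden j)
  have hMeval (x : K) : M x = ∑ j, (N j).eval x / (D j).eval x := by simp [hM, hΨ, N, D]
  have hpoly (p : K[X]) : ∃ L : K[X], ∑ j, affineSubst 1 (-s j)
      (algebraMap K[X] K⟮X⟯ (p.comp (X * (X + C u))) *
        (algebraMap K[X] K⟮X⟯ (N j) / algebraMap K[X] K⟮X⟯ (D j))) = algebraMap K[X] K⟮X⟯ L := by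
    obtain ⟨L, hL⟩ := hL p
    refine ⟨L, ?_⟩
    rw [← (sum_div_eq_algebraMap_iff_forall_eval
      (fun j => (p.comp (X * (X + C u))).comp (X - C (s j)) * num j) den hden L).2 ?_]
    · simp [N, D, comp_assoc, mul_div_assoc, sub_eq_add_neg]
    · intro x hx
      simp [← hL x hx, hΨ, mul_div_assoc]
  have hreflect : affineSubst (-1) (-u)
      (∑ j, algebraMap K[X] K⟮X⟯ (N j) / algebraMap K[X] K⟮X⟯ (D j)) =
        -∑ j, algebraMap K[X] K⟮X⟯ (N j) / algebraMap K[X] K⟮X⟯ (D j) := by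
    refine affineSubst_sum_div_eq_neg _ _ N D hD fun x hx hx' => ?_
    have hσ : ((-1 : Kˣ) : K) * x + -u = -(x + u) := by
      rw [Units.val_neg, Units.val_one]
      ring
    rw [hσ] at hx' ⊢
    rw [← hMeval, ← hMeval]
    exact hskew x (by simpa [D] using hx) (by simpa [D] using hx')
  obtain ⟨P, hP⟩ := exists_sum_eq_algebraMap u _ _ hpoly hreflect
  refine ⟨P, fun x hx => ?_⟩
  rw [hMeval, (sum_div_eq_algebraMap_iff_forall_eval N D hD P).1 hP x (by simpa [D] using hx)]

theorem stmt_12 (a b : ℝ) (m : ℕ) (hm : 0 < m)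
    (num den : Fin m → ℝ[X])
    -- each Ψ_j = num j / den j has at most simple poles (squarefree denominator)
    (hden : ∀ j, Squarefree (den j))
    (Ψ : Fin m → ℝ → ℝ)
    (hΨ : ∀ j x, Ψ j x = (num j).eval x / (den j).eval x)
    -- (1) for every polynomial p, L_p(x) = ∑_j (-1)^j p(θ(x-j)) Ψ_j(x) is a polynomial
    (hL : ∀ p : ℝ[X], ∃ L : ℝ[X], ∀ x : ℝ, (∀ j, (den j).eval x ≠ 0) →
      (∑ j : Fin m, (-1 : ℝ) ^ ((j : ℕ) + 1) *
          p.eval ((x - ((j : ℕ) + 1)) * ((x - ((j : ℕ) + 1)) + a + b + 1)) * Ψ j x)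
        = L.eval x)
    (M : ℝ → ℝ)
    (hM : ∀ x, M x = ∑ j : Fin m, (-1 : ℝ) ^ ((j : ℕ) + 1) * Ψ j (x + ((j : ℕ) + 1)))
    -- (2) skew-invariance of M under x ↦ -(x+a+b+1), away from the poles
    (hskew : ∀ x : ℝ,
      (∀ j, (den j).eval (x + ((j : ℕ) + 1)) ≠ 0) →
      (∀ j, (den j).eval (-(x + a + b + 1) + ((j : ℕ) + 1)) ≠ 0) →
      M (-(x + a + b + 1)) = -M x) :
    -- M is a polynomial
    ∃ P : ℝ[X], ∀ x : ℝ, (∀ j, (den j).eval (x + ((j : ℕ) + 1)) ≠ 0) →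
      M x = P.eval x :=
  stmt_12_general (a + b + 1) (fun j : Fin m => (j : ℕ) + 1)
    (fun j => C ((-1) ^ ((j : ℕ) + 1)) * num j) den (fun j => (hden j).ne_zero)
    (fun j x => (-1) ^ ((j : ℕ) + 1) * Ψ j x)
    (fun j x => by rw [hΨ, eval_mul, eval_C, mul_div_assoc])
    (by simpa only [mul_left_comm, mul_assoc, add_assoc] using hL) M hM
    (by simpa only [add_assoc] using hskew)
end

section
/- With the hypotheses of the previous statement (Ψ_j rational with simple poles, L_p polynomial for all polynomials p, and M skew-invariant), assume additionally that deg L_{x^g} ≤ 2g + deg L_1 for all g ≥ 0. Then M is a polynomial of degree at most deg L_1. -/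
open Polynomial

/-!
Write `θ(x) = x(x + t)` and `F j = (-1) ^ j Ψ j`, and let `c j = j` be the shifts. Skewness gives
`2 M(x) = M(x) - M(-(x + t))`, so it suffices to treat this difference. The kernel
`Q(x, z) = ∑ j, F j z * ∏ k ≠ j, (θ(z - c k) - θ(x))`
is a combination of the polynomials `L_{x^g}`, hence a polynomial in `x` and `z`, and the degree
hypothesis bounds its total degree by `d + 2(m - 1)`, where `d = deg L_1`. The nodal polynomial
`N = ∏ k, (θ(z - c k) - θ(x))` in `z` has the `2m` roots `x + c j` and `-(x + t) + c j`, at which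
`Q / N'` equals `F j z / (2x + t)` and `-F j z / (2x + t)` respectively. Therefore
`M(x) - M(-(x + t))` is `2x + t` times the divided difference of `Q(x, ·)` at these `2m` nodes.
The latter is the coefficient of `z ^ (2m - 1)` in the remainder of `Q` modulo `N`, so it is a
polynomial in `x`, and counting total degrees gives `1 + (d + 2(m - 1)) - (2m - 1) = d`.
-/

open Finset Filter
open scoped Polynomial.Bivariate

section TotalDegree

variable {R : Type*} [CommRing R]

/-- The bivariate polynomials of total degree at most `D`, where `D = ⊥` leaves only `0`. Both
variables count equally, so a bound on `P` also bounds the degree of each coefficient of `P`. -/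
def totalDegreeLE (R : Type*) [CommRing R] (D : WithBot ℕ) : Submodule R R[X][Y] where
  carrier := {P | ∀ i k, (P.coeff i).coeff k ≠ 0 → ((i + k : ℕ) : WithBot ℕ) ≤ D}
  zero_mem' i k h := by simp at h
  add_mem' {P Q} hP hQ i k h := by
    by_contra hD
    exact h (by rw [coeff_add, coeff_add, not_imp_comm.1 (hP i k) hD,
      not_imp_comm.1 (hQ i k) hD, add_zero])
  smul_mem' r P hP i k h :=
    hP i k fun h0 => h (by rw [coeff_smul, coeff_smul, h0, smul_zero])

theorem totalDegreeLE_mono {D E : WithBot ℕ} (h : D ≤ E) : totalDegreeLE R D ≤ totalDegreeLE R E :=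
  fun _ hP i k hne => (hP i k hne).trans h

theorem C_coeff_mul_mem_totalDegreeLE {D : WithBot ℕ} {P Q : R[X][Y]} {n : ℕ}
    (hP : P ∈ totalDegreeLE R D) (hQ : Q ∈ totalDegreeLE R n) :
    C (P.coeff n) * Q ∈ totalDegreeLE R D := by
  intro i k hne
  rw [coeff_C_mul, coeff_mul] at hne
  obtain ⟨⟨k₁, k₂⟩, hk, hne⟩ := exists_ne_zero_of_sum_ne_zero hne
  rw [HasAntidiagonal.mem_antidiagonal] at hk
  have hQ' : i + k₂ ≤ n := WithBot.coe_le_coe.1 (hQ i k₂ (right_ne_zero_of_mul hne))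
  exact (WithBot.coe_le_coe.2 (by lia)).trans (hP n k₁ (left_ne_zero_of_mul hne))

theorem mul_mem_totalDegreeLE {D E : WithBot ℕ} {P Q : R[X][Y]}
    (hP : P ∈ totalDegreeLE R D) (hQ : Q ∈ totalDegreeLE R E) :
    P * Q ∈ totalDegreeLE R (D + E) := by
  intro n l hne
  rw [coeff_mul, finsetSum_coeff] at hne
  obtain ⟨⟨i, j⟩, hij, hne⟩ := exists_ne_zero_of_sum_ne_zero hne
  rw [coeff_mul] at hne
  obtain ⟨⟨k₁, k₂⟩, hk, hne⟩ := exists_ne_zero_of_sum_ne_zero hne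
  rw [HasAntidiagonal.mem_antidiagonal] at hij hk
  calc ((n + l : ℕ) : WithBot ℕ) = (i + k₁ : ℕ) + (j + k₂ : ℕ) := by norm_cast; lia
    _ ≤ D + E := add_le_add (hP i k₁ (left_ne_zero_of_mul hne)) (hQ j k₂ (right_ne_zero_of_mul hne))

theorem C_mem_totalDegreeLE (p : R[X]) : C p ∈ totalDegreeLE R p.degree := by
  intro i k hne
  rw [coeff_C] at hne
  split_ifs at hne with hi
  · rw [hi, zero_add]
    exact le_degree_of_ne_zero hne
  · simp at hne

theorem map_C_mem_totalDegreeLE (p : R[X]) : p.map C ∈ totalDegreeLE R p.degree := by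
  intro i k hne
  rw [coeff_map, coeff_C] at hne
  split_ifs at hne with hk
  · rw [hk, add_zero]
    exact le_degree_of_ne_zero hne
  · simp at hne

theorem C_mem_totalDegreeLE_of_degree_le {D : WithBot ℕ} {p : R[X]} (h : p.degree ≤ D) :
    C p ∈ totalDegreeLE R D :=
  totalDegreeLE_mono h (C_mem_totalDegreeLE p)

theorem CC_mem_totalDegreeLE (r : R) (n : ℕ) : CC r ∈ totalDegreeLE R n :=
  C_mem_totalDegreeLE_of_degree_le (degree_C_le.trans (by exact_mod_cast n.zero_le))

theorem Y_mem_totalDegreeLE : (Y : R[X][Y]) ∈ totalDegreeLE R 1 := by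
  simpa using totalDegreeLE_mono degree_X_le (map_C_mem_totalDegreeLE (X : R[X]))

theorem prod_mem_totalDegreeLE {κ : Type*} {s : Finset κ} {P : κ → R[X][Y]} {n : ℕ}
    (h : ∀ j ∈ s, P j ∈ totalDegreeLE R n) :
    ∏ j ∈ s, P j ∈ totalDegreeLE R (#s * n : ℕ) := by
  classical
  induction s using Finset.induction_on with
  | empty => simpa [CC] using CC_mem_totalDegreeLE (1 : R) 0
  | insert j s hj ih =>
    rw [prod_insert hj, card_insert_of_notMem hj, add_one_mul, add_comm]
    simpa using mul_mem_totalDegreeLE (h j (mem_insert_self j s))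
      (ih fun i hi => h i (mem_insert_of_mem hi))

theorem pow_mem_totalDegreeLE {P : R[X][Y]} {n : ℕ} (h : P ∈ totalDegreeLE R n) (k : ℕ) :
    P ^ k ∈ totalDegreeLE R (k * n : ℕ) := by
  simpa using prod_mem_totalDegreeLE (s := range k) fun _ _ => h

theorem modByMonic_mem_totalDegreeLE {D : WithBot ℕ} {N : R[X][Y]} (hN : N.Monic)
    (hNdeg : N ∈ totalDegreeLE R N.natDegree) {P : R[X][Y]} (hP : P ∈ totalDegreeLE R D) :
    P %ₘ N ∈ totalDegreeLE R D := by
  induction P using degree_lt_wf.induction with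
  | _ P ih =>
  by_cases hlt : N.degree ≤ P.degree ∧ P ≠ 0
  · set S := N * (C P.leadingCoeff * Y ^ (P.natDegree - N.natDegree)) with hS
    have hmod : P %ₘ N = (P - S) %ₘ N := by
      rw [sub_modByMonic, hS, self_mul_modByMonic hN, sub_zero]
    have hle : N.natDegree ≤ P.natDegree := natDegree_le_natDegree hlt.1
    have hYN : Y ^ (P.natDegree - N.natDegree) * N ∈ totalDegreeLE R P.natDegree := by
      have := mul_mem_totalDegreeLE (pow_mem_totalDegreeLE (n := 1) Y_mem_totalDegreeLE
        (P.natDegree - N.natDegree)) hNdeg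
      rwa [mul_one, ← Nat.cast_add, Nat.sub_add_cancel hle] at this
    have hSmem : S ∈ totalDegreeLE R D := by
      rw [hS, mul_comm, mul_assoc]
      exact C_coeff_mul_mem_totalDegreeLE hP hYN
    rw [hmod]
    exact ih _ (div_wf_lemma hlt hN) (Submodule.sub_mem _ hP hSmem)
  · nontriviality R
    rwa [(modByMonic_eq_self_iff hN).2]
    by_contra hcon
    refine hlt ⟨not_lt.1 hcon, ?_⟩
    rintro rfl
    exact hcon (by simpa [bot_lt_iff_ne_bot] using hN.ne_zero)

theorem nodal_mem_totalDegreeLE {κ : Type*} (s : Finset κ) {v : κ → R[X]}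
    (hv : ∀ j ∈ s, (v j).degree ≤ 1) : Lagrange.nodal s v ∈ totalDegreeLE R #s := by
  rw [Lagrange.nodal_eq]
  simpa using prod_mem_totalDegreeLE (n := 1) fun j hj =>
    Submodule.sub_mem _ Y_mem_totalDegreeLE (C_mem_totalDegreeLE_of_degree_le (hv j hj))

theorem degree_coeff_le_of_mem_totalDegreeLE {D : WithBot ℕ} {P : R[X][Y]} {n : ℕ}
    (h : P ∈ totalDegreeLE R (D + n)) : (P.coeff n).degree ≤ D := by
  rw [degree_le_iff_coeff_zero]
  intro k hk
  by_contra hne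
  have := h n k hne
  rw [add_comm n k, Nat.cast_add] at this
  exact hk.not_ge (WithBot.le_of_add_le_add_right (WithBot.natCast_ne_bot n) this)

end TotalDegree

section Elementary

theorem prod_erase_eq_sum_esymm_mul_pow {R ι : Type*} [CommRing R] [DecidableEq ι] {s : Finset ι}
    (w : ι → R) {j : ι} (hj : j ∈ s) :
    ∏ k ∈ s.erase j, w k =
      ∑ i ∈ range #s, (∑ u ∈ powersetCard (#s - 1 - i) s, ∏ k ∈ u, w k) * (-w j) ^ i := by
  nontriviality R
  set A : R[X] := ∏ k ∈ s, (X + C (w k)) with hA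
  have hquot : A /ₘ (X - C (-w j)) = ∏ k ∈ s.erase j, (X + C (w k)) := by
    rw [hA, ← mul_prod_erase s _ hj, C_neg, sub_neg_eq_add,
      mul_divByMonic_cancel_left _ (monic_X_add_C _)]
  have hdeg : A.natDegree = #s := by
    rw [hA, natDegree_prod_of_monic _ _ fun k _ => monic_X_add_C _]
    simp
  calc ∏ k ∈ s.erase j, w k = (A /ₘ (X - C (-w j))).coeff 0 := by
        rw [hquot, coeff_zero_eq_eval_zero, eval_prod]
        simp
    _ = ∑ i ∈ range #s, (-w j) ^ i * A.coeff (i + 1) := by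
        rw [coeff_divByMonic_X_sub_C, hdeg, ← Finset.Ico_add_one_right_eq_Icc,
          sum_Ico_eq_sum_range]
        simp [add_comm]
    _ = _ := sum_congr rfl fun i hi => by
        rw [hA, prod_X_add_C_coeff s w (mem_range.1 hi), mul_comm, Nat.sub_sub, add_comm 1 i]

theorem sum_mul_prod_erase_of_eq_zero {R ι : Type*} [CommRing R] [Fintype ι] [DecidableEq ι]
    {w : ι → R} {j : ι} (hj : w j = 0) (f : ι → R) :
    ∑ i, f i * ∏ k ∈ univ.erase i, w k = f j * ∏ k ∈ univ.erase j, w k := by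
  refine Fintype.sum_eq_single j fun i hi => ?_
  rw [prod_eq_zero (mem_erase.2 ⟨hi.symm, mem_univ j⟩) hj, mul_zero]

theorem coeff_modByMonic_nodal_eq_sum {K κ : Type*} [Field K] {s : Finset κ} {v : κ → K}
    (hv : Set.InjOn v s) (P : K[X]) :
    (P %ₘ Lagrange.nodal s v).coeff (#s - 1) =
      ∑ i ∈ s, P.eval (v i) / (derivative (Lagrange.nodal s v)).eval (v i) := by
  classical
  have hdeg : (P %ₘ Lagrange.nodal s v).degree < #s :=
    Lagrange.degree_nodal (R := K) (v := v) ▸ degree_modByMonic_lt P Lagrange.nodal_monic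
  rw [Lagrange.coeff_eq_sum hv hdeg]
  refine sum_congr rfl fun i hi => ?_
  rw [Lagrange.eval_nodal_derivative_eval_node_eq hi, Lagrange.eval_nodal,
    ← coe_aeval_eq_eval, aeval_modByMonic_eq_self_of_root]
  simpa [coe_aeval_eq_eval] using Lagrange.eval_nodal_at_node hi

theorem eval_derivative_nodal_ne_zero {K κ : Type*} [Field K] [Fintype κ] {v : κ → K}
    (hv : Function.Injective v) (s : κ) :
    (derivative (Lagrange.nodal univ v)).eval (v s) ≠ 0 := by
  classical
  rw [Lagrange.eval_nodal_derivative_eval_node_eq (mem_univ s), Lagrange.eval_nodal]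
  exact prod_ne_zero_iff.2 fun i hi => sub_ne_zero.2 (hv.ne (ne_of_mem_erase hi).symm)

theorem eventually_cofinite_eval_ne_zero {R : Type*} [CommRing R] [IsDomain R] {p : R[X]}
    (hp : p ≠ 0) : ∀ᶠ x in cofinite, p.eval x ≠ 0 := by
  simpa [IsRoot] using finite_setOfPred_isRoot hp

end Elementary

section Kernel

/-- The quadratic map `θ`, invariant under the reflection `x ↦ -(x + t)`; the theorem has
`t = a + b + 1`. -/
def theta {R : Type*} [CommRing R] (t x : R) : R :=
  x * (x + t)

variable {R : Type*} [CommRing R] {ι : Type*} (t : R) (c : ι → R) (L : ℕ → R[X])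

theorem theta_reflect (x : R) : theta t (-(x + t)) = theta t x := by
  unfold theta
  ring

/-- The bivariate polynomial `θ(z - c k) - θ(x)`, where `x` is the inner variable `X` and `z` is the
outer variable `Y`. -/
noncomputable def thetaDiff (k : ι) : R[X][Y] :=
  theta (CC t) (Y - CC (c k)) - C (theta (C t) X)

theorem evalEval_thetaDiff (x z : R) (k : ι) :
    (thetaDiff t c k).evalEval x z = theta t (z - c k) - theta t x := by
  simp [thetaDiff, theta, evalEval]

theorem degree_theta_X_le : (theta (C t) X : R[X]).degree ≤ 2 := by
  unfold theta
  compute_degree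

theorem thetaDiff_mem_totalDegreeLE (k : ι) : thetaDiff t c k ∈ totalDegreeLE R (2 : ℕ) := by
  have hY : Y - CC (c k) ∈ totalDegreeLE R 1 :=
    Submodule.sub_mem _ Y_mem_totalDegreeLE (CC_mem_totalDegreeLE _ 1)
  exact Submodule.sub_mem _
    (mul_mem_totalDegreeLE hY (Submodule.add_mem _ hY (CC_mem_totalDegreeLE _ 1)))
    (C_mem_totalDegreeLE_of_degree_le (degree_theta_X_le t))

/-- The bivariate polynomial `∑ j, F j z * (θ(x) - θ(z - c j)) ^ i` for functions `F j` with moments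
`∑ j, F j z * θ(z - c j) ^ g = L g z`, written in terms of the `L g`. -/
noncomputable def diffMoment (i : ℕ) : R[X][Y] :=
  ∑ g ∈ range (i + 1),
    ((-1) ^ g * (i.choose g : R)) • (C (theta (C t) X) ^ (i - g) * (L g).map C)

variable {t c L} in
theorem evalEval_diffMoment [Fintype ι] {z : R} {f : ι → R}
    (hf : ∀ g, ∑ j, f j * theta t (z - c j) ^ g = (L g).eval z) (x : R) (i : ℕ) :
    (diffMoment t L i).evalEval x z = ∑ j, f j * (theta t x - theta t (z - c j)) ^ i := by
  have hterm (g : ℕ) :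
      (((-1) ^ g * (i.choose g : R)) • (C (theta (C t) X) ^ (i - g) * (L g).map C)).evalEval x z =
        ∑ j, f j * ((-theta t (z - c j)) ^ g * theta t x ^ (i - g) * i.choose g) := by
    have hθ : (theta (C t) X : R[X]).eval x = theta t x := by simp [theta]
    rw [evalEval_smul, evalEval_mul, evalEval_pow, evalEval_C, evalEval_map_C, hθ, ← hf,
      smul_eq_mul, mul_sum, mul_sum]
    refine sum_congr rfl fun j _ => ?_
    rw [neg_pow]
    ring
  rw [diffMoment, evalEval_finsetSum, sum_congr rfl fun g _ => hterm g, sum_comm]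
  refine sum_congr rfl fun j _ => ?_
  rw [← mul_sum, ← add_pow, neg_add_eq_sub]

variable {L} in
theorem diffMoment_mem_totalDegreeLE {d : WithBot ℕ} (hL : ∀ g : ℕ, (L g).degree ≤ d + 2 * g)
    (i : ℕ) : diffMoment t L i ∈ totalDegreeLE R (d + (2 * i : ℕ)) := by
  refine Submodule.sum_mem _ fun g hg => Submodule.smul_mem _ _ ?_
  have hpow := pow_mem_totalDegreeLE (n := 2)
    (C_mem_totalDegreeLE_of_degree_le (degree_theta_X_le t)) (i - g)
  have hi : (i - g) * 2 + 2 * g = 2 * i := by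
    have := mem_range_succ_iff.1 hg
    lia
  refine totalDegreeLE_mono ?_ (mul_mem_totalDegreeLE hpow (map_C_mem_totalDegreeLE (L g)))
  calc (((i - g) * 2 : ℕ) : WithBot ℕ) + (L g).degree
      ≤ ((i - g) * 2 : ℕ) + (d + (2 * g : ℕ)) := by
        gcongr
        exact_mod_cast hL g
    _ = d + (2 * i : ℕ) := by rw [add_left_comm, ← Nat.cast_add, hi]

variable [Fintype ι]

/-- The bivariate polynomial `∑ j, F j z * ∏ k ≠ j, (θ(z - c k) - θ(x))` for functions `F j` with
moments `∑ j, F j z * θ(z - c j) ^ g = L g z`, written in terms of the `L g`. -/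
noncomputable def momentKernel : R[X][Y] :=
  ∑ i ∈ range (Fintype.card ι),
    (∑ u ∈ powersetCard (Fintype.card ι - 1 - i) univ, ∏ k ∈ u, thetaDiff t c k) *
      diffMoment t L i

variable {t c L} in
theorem evalEval_momentKernel [DecidableEq ι] {z : R} {f : ι → R}
    (hf : ∀ g, ∑ j, f j * theta t (z - c j) ^ g = (L g).eval z) (x : R) :
    (momentKernel t c L).evalEval x z =
      ∑ j, f j * ∏ k ∈ univ.erase j, (theta t (z - c k) - theta t x) := by
  simp_rw [momentKernel, evalEval_finsetSum, evalEval_mul, evalEval_finsetSum, evalEval_prod,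
    evalEval_thetaDiff, evalEval_diffMoment hf, mul_sum]
  rw [sum_comm]
  refine sum_congr rfl fun j _ => ?_
  rw [prod_erase_eq_sum_esymm_mul_pow _ (mem_univ j), mul_sum, card_univ]
  refine sum_congr rfl fun i _ => ?_
  rw [neg_sub, mul_left_comm]

variable {L} in
theorem momentKernel_mem_totalDegreeLE {d : WithBot ℕ} (hL : ∀ g : ℕ, (L g).degree ≤ d + 2 * g) :
    momentKernel t c L ∈ totalDegreeLE R (d + (2 * (Fintype.card ι - 1) : ℕ)) := by
  refine Submodule.sum_mem _ fun i hi => ?_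
  have hesymm : ∑ u ∈ powersetCard (Fintype.card ι - 1 - i) univ, ∏ k ∈ u, thetaDiff t c k ∈
      totalDegreeLE R ((Fintype.card ι - 1 - i) * 2 : ℕ) := by
    refine Submodule.sum_mem _ fun u hu => ?_
    rw [← (mem_powersetCard.1 hu).2]
    exact prod_mem_totalDegreeLE fun k _ => thetaDiff_mem_totalDegreeLE t c k
  have hcard : (Fintype.card ι - 1 - i) * 2 + 2 * i = 2 * (Fintype.card ι - 1) := by
    have := mem_range.1 hi
    lia
  have h := mul_mem_totalDegreeLE hesymm (diffMoment_mem_totalDegreeLE t hL i)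
  rwa [add_left_comm, ← Nat.cast_add, hcard] at h

end Kernel

section ReflectedNode

variable {R : Type*} [CommRing R] {ι : Type*} {t : R} {c : ι → R} {x : R}

/-- The solutions `z = x + c j` and `z = -(x + t) + c j` of the equations `θ(z - c j) = θ(x)`. -/
def reflectedNode (t : R) (c : ι → R) (x : R) : ι ⊕ ι → R :=
  Sum.elim (fun j => x + c j) (fun j => -(x + t) + c j)

theorem reflectedNode_inl (t : R) (c : ι → R) (x : R) (j : ι) :
    reflectedNode t c x (.inl j) = x + c j :=
  rfl

theorem reflectedNode_inr (t : R) (c : ι → R) (x : R) (j : ι) :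
    reflectedNode t c x (.inr j) = -(x + t) + c j :=
  rfl

theorem reflectedNode_injective (hc : Function.Injective c) (hx : ∀ j k, 2 * x + t ≠ c k - c j) :
    Function.Injective (reflectedNode t c x) := by
  refine Function.Injective.sumElim (fun j k h => hc (add_left_cancel h))
    (fun j k h => hc (add_left_cancel h)) fun j k h => hx j k ?_
  linear_combination h

variable (t c) in
theorem degree_reflectedNode_le (s : ι ⊕ ι) :
    (reflectedNode (C t) (fun j => C (c j)) X s : R[X]).degree ≤ 1 := by
  cases s <;> simp only [reflectedNode_inl, reflectedNode_inr] <;> compute_degree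

variable [Fintype ι]

variable (t c x) in
theorem nodal_reflectedNode :
    Lagrange.nodal univ (reflectedNode t c x) =
      ∏ k, (theta (C t) (X - C (c k)) - C (theta t x)) := by
  rw [Lagrange.nodal_eq, Fintype.prod_sum_type, ← prod_mul_distrib]
  refine prod_congr rfl fun k _ => ?_
  simp only [reflectedNode_inl, reflectedNode_inr, theta, C_add, C_neg, C_mul]
  ring

theorem eval_derivative_nodal_reflectedNode [DecidableEq ι] {z : R} {j : ι}
    (hz : theta t (z - c j) = theta t x) :
    (derivative (Lagrange.nodal univ (reflectedNode t c x))).eval z =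
      (2 * (z - c j) + t) * ∏ k ∈ univ.erase j, (theta t (z - c k) - theta t x) := by
  rw [nodal_reflectedNode, derivative_prod_finset, eval_finsetSum,
    ← sum_mul_prod_erase_of_eq_zero (w := fun k => theta t (z - c k) - theta t x)
      (sub_eq_zero.2 hz) fun k => 2 * (z - c k) + t]
  refine sum_congr rfl fun k _ => ?_
  simp only [theta, eval_mul, eval_prod, derivative_sub, derivative_mul, derivative_add,
    derivative_X, derivative_C, eval_sub, eval_add, eval_X, eval_C, eval_one, eval_zero]
  ring

variable (t c) in
/-- The divided difference in `z` of `momentKernel t c L` at the nodes `reflectedNode t c x`, as a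
polynomial in `x`: the top coefficient of the remainder modulo the nodal polynomial. -/
noncomputable def kernelDividedDiff (L : ℕ → R[X]) : R[X] :=
  (momentKernel t c L %ₘ Lagrange.nodal univ (reflectedNode (C t) (fun j => C (c j)) X)).coeff
    (Fintype.card (ι ⊕ ι) - 1)

variable (t c) in
theorem degree_mul_kernelDividedDiff_le [Nonempty ι] {L : ℕ → R[X]} {d : WithBot ℕ}
    (hL : ∀ g : ℕ, (L g).degree ≤ d + 2 * g) :
    ((2 * X + C t) * kernelDividedDiff t c L).degree ≤ d := by
  nontriviality R
  set N : R[X][Y] := Lagrange.nodal univ (reflectedNode (C t) (fun j => C (c j)) X) with hN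
  have hNdeg : N ∈ totalDegreeLE R N.natDegree := by
    rw [hN, Lagrange.natDegree_nodal]
    exact nodal_mem_totalDegreeLE _ fun s _ => degree_reflectedNode_le t c s
  have hlinear : (2 * X + C t : R[X]).degree ≤ 1 := by compute_degree
  have hmem := mul_mem_totalDegreeLE (C_mem_totalDegreeLE_of_degree_le hlinear)
    (modByMonic_mem_totalDegreeLE Lagrange.nodal_monic hNdeg
      (momentKernel_mem_totalDegreeLE t c hL))
  have hcard : 1 + 2 * (Fintype.card ι - 1) = Fintype.card (ι ⊕ ι) - 1 := by
    have := Fintype.card_pos (α := ι)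
    rw [Fintype.card_sum]
    lia
  rw [kernelDividedDiff, ← coeff_C_mul]
  apply degree_coeff_le_of_mem_totalDegreeLE
  rwa [add_left_comm, ← Nat.cast_one, ← Nat.cast_add, hcard] at hmem

end ReflectedNode

section DividedDifference

variable {K : Type*} [Field K] {ι : Type*} [Fintype ι] {t : K} {c : ι → K} {x : K}

theorem evalEval_momentKernel_div_eval_derivative {L : ℕ → K[X]} {z : K} {f : ι → K}
    (hf : ∀ g, ∑ j, f j * theta t (z - c j) ^ g = (L g).eval z) {j : ι}
    (hz : theta t (z - c j) = theta t x)
    (hsimple : (derivative (Lagrange.nodal univ (reflectedNode t c x))).eval z ≠ 0) :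
    (momentKernel t c L).evalEval x z /
        (derivative (Lagrange.nodal univ (reflectedNode t c x))).eval z =
      f j / (2 * (z - c j) + t) := by
  classical
  rw [eval_derivative_nodal_reflectedNode hz] at hsimple ⊢
  rw [evalEval_momentKernel hf,
    sum_mul_prod_erase_of_eq_zero (w := fun k => theta t (z - c k) - theta t x) (sub_eq_zero.2 hz),
    mul_div_mul_right _ _ (right_ne_zero_of_mul hsimple)]

theorem eval_kernelDividedDiff (L : ℕ → K[X]) (hv : Function.Injective (reflectedNode t c x)) :
    (kernelDividedDiff t c L).eval x =
      ∑ s, (momentKernel t c L).evalEval x (reflectedNode t c x s) /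
        (derivative (Lagrange.nodal univ (reflectedNode t c x))).eval (reflectedNode t c x s) := by
  have hmap : (Lagrange.nodal univ (reflectedNode (C t) (fun j => C (c j)) X)).map
      (evalRingHom x) = Lagrange.nodal univ (reflectedNode t c x) := by
    simp [Lagrange.nodal_eq, Polynomial.map_prod, reflectedNode]
  rw [kernelDividedDiff, ← coe_evalRingHom, ← coeff_map, map_modByMonic _ Lagrange.nodal_monic,
    hmap, ← card_univ, coeff_modByMonic_nodal_eq_sum hv.injOn]
  simp only [map_evalRingHom_eval]

theorem mul_eval_kernelDividedDiff [Nonempty ι] (hc : Function.Injective c)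
    (hx : ∀ j k, 2 * x + t ≠ c k - c j) {L : ℕ → K[X]} {F : ι → K → K}
    (hF : ∀ s g, ∑ j, F j (reflectedNode t c x s) * theta t (reflectedNode t c x s - c j) ^ g =
      (L g).eval (reflectedNode t c x s)) :
    (2 * x + t) * (kernelDividedDiff t c L).eval x =
      ∑ j, F j (x + c j) - ∑ j, F j (-(x + t) + c j) := by
  have hv := reflectedNode_injective hc hx
  have hxt : 2 * x + t ≠ 0 := by
    simpa using hx (Classical.arbitrary ι) (Classical.arbitrary ι)
  rw [eval_kernelDividedDiff L hv, Fintype.sum_sum_type]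
  simp only [reflectedNode_inl, reflectedNode_inr]
  set Q := momentKernel t c L
  set N' := derivative (Lagrange.nodal univ (reflectedNode t c x))
  have hleft (j : ι) : Q.evalEval x (x + c j) / N'.eval (x + c j) =
      F j (x + c j) / (2 * x + t) := by
    have h := evalEval_momentKernel_div_eval_derivative (hF (.inl j)) (j := j) (x := x)
      (by rw [reflectedNode_inl, add_sub_cancel_right]) (eval_derivative_nodal_ne_zero hv _)
    simpa only [reflectedNode_inl, add_sub_cancel_right] using h
  have hright (j : ι) : Q.evalEval x (-(x + t) + c j) / N'.eval (-(x + t) + c j) =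
      -(F j (-(x + t) + c j) / (2 * x + t)) := by
    have hneg : 2 * -(x + t) + t = -(2 * x + t) := by ring
    have h := evalEval_momentKernel_div_eval_derivative (hF (.inr j)) (j := j) (x := x)
      (by rw [reflectedNode_inr, add_sub_cancel_right, theta_reflect])
      (eval_derivative_nodal_ne_zero hv _)
    simpa only [reflectedNode_inr, add_sub_cancel_right, hneg, div_neg] using h
  simp_rw [hleft, hright, sum_neg_distrib, ← sum_div]
  field_simp
  ring

end DividedDifference

section SkewSum

variable {K : Type*} [Field K] {ι : Type*}

theorem eventually_forall_reflectedNode {R : Type*} [CommRing R] [Finite ι] (t : R) (c : ι → R)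
    {p : R → Prop} (hp : ∀ᶠ z in cofinite, p z) :
    ∀ᶠ x in cofinite, ∀ s, p (reflectedNode t c x s) := by
  refine eventually_all.2 fun s => ?_
  have hinj : Function.Injective fun x => reflectedNode t c x s := fun x y hxy => ?_
  · exact hinj.tendsto_cofinite.eventually hp
  rcases s with j | j
  · simpa [reflectedNode_inl] using hxy
  · simpa [reflectedNode_inr, -neg_add_rev] using hxy

theorem eventually_forall_two_mul_add_ne [Finite ι] [NeZero (2 : K)] (t : K) (c : ι → K) :
    ∀ᶠ x in cofinite, ∀ j k, 2 * x + t ≠ c k - c j := by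
  have hinj : Function.Injective fun x : K => 2 * x + t :=
    (add_left_injective t).comp (mul_right_injective₀ two_ne_zero)
  exact eventually_all.2 fun j => eventually_all.2 fun k =>
    hinj.tendsto_cofinite.eventually (eventually_cofinite_ne (c k - c j))

variable [Fintype ι]

theorem exists_degree_le_eventually_sum_shift_eq_eval [NeZero (2 : K)] [Nonempty ι] {t : K}
    {c : ι → K} (hc : Function.Injective c) {F : ι → K → K} {L : ℕ → K[X]} {d : WithBot ℕ}
    (hL : ∀ᶠ z in cofinite, ∀ g, ∑ j, F j z * theta t (z - c j) ^ g = (L g).eval z)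
    (hdeg : ∀ g : ℕ, (L g).degree ≤ d + 2 * g)
    (hskew : ∀ᶠ x in cofinite, ∑ j, F j (-(x + t) + c j) = -∑ j, F j (x + c j)) :
    ∃ P : K[X], P.degree ≤ d ∧ ∀ᶠ x in cofinite, ∑ j, F j (x + c j) = P.eval x := by
  refine ⟨C 2⁻¹ * ((2 * X + C t) * kernelDividedDiff t c L), ?_, ?_⟩
  · rw [degree_C_mul (inv_ne_zero two_ne_zero)]
    exact degree_mul_kernelDividedDiff_le t c hdeg
  · filter_upwards [eventually_forall_reflectedNode t c hL, eventually_forall_two_mul_add_ne t c,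
      hskew] with x hLx hx hskewx
    have h := mul_eval_kernelDividedDiff hc hx hLx
    rw [hskewx, sub_neg_eq_add, ← two_mul] at h
    simp only [eval_mul, eval_add, eval_C, eval_X, eval_ofNat, h]
    rw [inv_mul_cancel_left₀ two_ne_zero]

theorem prod_mul_sum_div [DecidableEq ι] {n d : ι → K} (hd : ∀ j, d j ≠ 0) :
    (∏ j, d j) * ∑ j, n j / d j = ∑ j, n j * ∏ k ∈ univ.erase j, d k := by
  rw [mul_sum]
  refine sum_congr rfl fun j _ => ?_
  rw [← mul_prod_erase univ d (mem_univ j)]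
  field_simp [hd j]

theorem sum_div_eq_eval_of_eventually [Infinite K] {n d : ι → K[X]} {P : K[X]} (hd : ∀ j, d j ≠ 0)
    (h : ∀ᶠ x in cofinite, ∑ j, (n j).eval x / (d j).eval x = P.eval x) {x : K}
    (hx : ∀ j, (d j).eval x ≠ 0) : ∑ j, (n j).eval x / (d j).eval x = P.eval x := by
  classical
  have hpoles : ∀ᶠ y in cofinite, ∀ j, (d j).eval y ≠ 0 :=
    eventually_all.2 fun j => eventually_cofinite_eval_ne_zero (hd j)
  have hclear : ∑ j, n j * ∏ k ∈ univ.erase j, d k = (∏ j, d j) * P := by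
    refine eq_of_infinite_eval_eq _ _ (frequently_cofinite_iff_infinite.1 ?_)
    refine (hpoles.and h).frequently.mono fun y ⟨hy, hyP⟩ => ?_
    simp only [eval_finsetSum, eval_mul, eval_prod, ← hyP, prod_mul_sum_div hy]
  refine mul_left_cancel₀ (prod_ne_zero_iff.2 fun j (_ : j ∈ univ) => hx j) ?_
  rw [prod_mul_sum_div hx]
  simpa only [eval_finsetSum, eval_mul, eval_prod] using congrArg (eval x) hclear

end SkewSum

theorem stmt_13_general {K : Type*} [Field K] [Infinite K] [NeZero (2 : K)] {ι : Type*} [Fintype ι]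
    [Nonempty ι] (t : K) (c ε : ι → K) (hc : Function.Injective c) (num den : ι → K[X])
    (hden : ∀ j, den j ≠ 0) (Ψ : ι → K → K)
    (hΨ : ∀ j x, Ψ j x = (num j).eval x / (den j).eval x) (Lp : K[X] → K[X])
    (hL : ∀ p : K[X], ∀ x, (∀ j, (den j).eval x ≠ 0) →
      ∑ j, ε j * p.eval (theta t (x - c j)) * Ψ j x = (Lp p).eval x)
    (M : K → K) (hM : ∀ x, M x = ∑ j, ε j * Ψ j (x + c j))
    (hskew : ∀ x, (∀ j, (den j).eval (x + c j) ≠ 0) → (∀ j, (den j).eval (-(x + t) + c j) ≠ 0) →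
      M (-(x + t)) = -M x)
    (d : WithBot ℕ) (hdeg : ∀ g : ℕ, (Lp (X ^ g)).degree ≤ d + 2 * g) :
    ∃ P : K[X], P.degree ≤ d ∧ ∀ x, (∀ j, (den j).eval (x + c j) ≠ 0) → M x = P.eval x := by
  have hpoles : ∀ᶠ z in cofinite, ∀ j, (den j).eval z ≠ 0 :=
    eventually_all.2 fun j => eventually_cofinite_eval_ne_zero (hden j)
  have hmoment : ∀ᶠ z in cofinite, ∀ g,
      ∑ j, ε j * Ψ j z * theta t (z - c j) ^ g = (Lp (X ^ g)).eval z := by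
    filter_upwards [hpoles] with z hz g
    simpa only [eval_pow, eval_X, mul_right_comm] using hL (X ^ g) z hz
  have hskew' : ∀ᶠ x in cofinite,
      ∑ j, ε j * Ψ j (-(x + t) + c j) = -∑ j, ε j * Ψ j (x + c j) := by
    filter_upwards [eventually_forall_reflectedNode t c hpoles] with x hx
    rw [← hM, ← hM]
    exact hskew x (fun j => hx (.inl j) j) (fun j => hx (.inr j) j)
  obtain ⟨P, hPdeg, hP⟩ :=
    exists_degree_le_eventually_sum_shift_eq_eval (F := fun j z => ε j * Ψ j z) hc hmoment hdeg
      hskew'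
  have hMdiv (x : K) : ∑ j, ε j * Ψ j (x + c j) =
      ∑ j, (C (ε j) * taylor (c j) (num j)).eval x / (taylor (c j) (den j)).eval x := by
    simp only [hΨ, eval_mul, eval_C, taylor_eval, mul_div_assoc]
  have hden' (j : ι) : taylor (c j) (den j) ≠ 0 :=
    (map_ne_zero_iff _ (taylor_injective _)).2 (hden j)
  refine ⟨P, hPdeg, fun x hx => ?_⟩
  rw [hM, hMdiv]
  refine sum_div_eq_eval_of_eventually hden' (by simpa only [hMdiv] using hP) fun j => ?_
  simpa only [taylor_eval] using hx j

theorem stmt_13 (a b : ℝ) (m : ℕ) (hm : 0 < m)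
    (num den : Fin m → ℝ[X])
    -- each Ψ_j = num j / den j has at most simple poles (squarefree denominator)
    (hden : ∀ j, Squarefree (den j))
    (Ψ : Fin m → ℝ → ℝ)
    (hΨ : ∀ j x, Ψ j x = (num j).eval x / (den j).eval x)
    -- for every polynomial p, L_p(x) = ∑_j (-1)^j p(θ(x-j)) Ψ_j(x) equals the polynomial Lp p
    (Lp : ℝ[X] → ℝ[X])
    (hL : ∀ p : ℝ[X], ∀ x : ℝ, (∀ j, (den j).eval x ≠ 0) →
      (∑ j : Fin m, (-1 : ℝ) ^ ((j : ℕ) + 1) *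
          p.eval ((x - ((j : ℕ) + 1)) * ((x - ((j : ℕ) + 1)) + a + b + 1)) * Ψ j x)
        = (Lp p).eval x)
    (M : ℝ → ℝ)
    (hM : ∀ x, M x = ∑ j : Fin m, (-1 : ℝ) ^ ((j : ℕ) + 1) * Ψ j (x + ((j : ℕ) + 1)))
    -- skew-invariance of M under x ↦ -(x+a+b+1), away from the poles
    (hskew : ∀ x : ℝ,
      (∀ j, (den j).eval (x + ((j : ℕ) + 1)) ≠ 0) →
      (∀ j, (den j).eval (-(x + a + b + 1) + ((j : ℕ) + 1)) ≠ 0) →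
      M (-(x + a + b + 1)) = -M x)
    -- deg L_{x^g} ≤ 2g + deg L_1 for all g
    (hdeg : ∀ g : ℕ, (Lp (X ^ g)).degree ≤ (Lp 1).degree + 2 * g) :
    -- M is a polynomial of degree at most deg L_1
    ∃ P : ℝ[X], P.degree ≤ (Lp 1).degree ∧
      ∀ x : ℝ, (∀ j, (den j).eval (x + ((j : ℕ) + 1)) ≠ 0) → M x = P.eval x := by
  have : Nonempty (Fin m) := ⟨⟨0, hm⟩⟩
  have hshift : Function.Injective fun j : Fin m => ((j : ℕ) : ℝ) + 1 :=
    (add_left_injective 1).comp (Nat.cast_injective.comp Fin.val_injective)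
  exact stmt_13_general (a + b + 1) _ (fun j : Fin m => (-1) ^ ((j : ℕ) + 1)) hshift num den
    (fun j => (hden j).ne_zero) Ψ hΨ Lp (by simpa only [theta, add_assoc] using hL) M hM
    (by simpa only [add_assoc] using hskew) _ hdeg
end
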